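/- (Kopylov) Let k ≥ 5 and let G be a 2-connected simple graph on n ≥ k vertices. If e(G) > max{ h(n, k, ⌊k/2⌋), h(n, k, 2) }, then G contains a cycle of length at least k. -/

import Mathlib

open SimpleGraph

/-- The number of edges of a simple graph. -/
noncomputable def edgeCount {V : Type*} (G : SimpleGraph V) : ℕ := G.edgeSet.ncard

/-- `H` occurs as a subgraph of `G` (there is an injective map preserving adjacency). -/
def ContainsCopy {V W : Type*} (G : SimpleGraph V) (H : SimpleGraph W) : Prop :=
  ∃ f : W → V, Function.Injective f ∧ ∀ a b : W, H.Adj a b → G.Adj (f a) (f b)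

/-- The Turán number `ex(n, H)`: the maximum number of edges of an `H`-free
simple graph on `n` vertices. -/
noncomputable def exNum (n : ℕ) {W : Type*} (H : SimpleGraph W) : ℕ :=
  sSup {m | ∃ G : SimpleGraph (Fin n), ¬ ContainsCopy G H ∧ edgeCount G = m}

/-- `h(n,k,a) = C(k-a,2) + a(n-k+a)`. -/
def hFun (n k a : ℕ) : ℕ := (k - a).choose 2 + a * (n - k + a)

/-- `c(n,m,ℓ) = C(m-1,2) + t·C(ℓ-1,2) + C(r,2)` where `n = (m-1) + t(ℓ-1) + r`,
`0 ≤ r < ℓ-1`. -/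
def cFun (n m l : ℕ) : ℕ :=
  (m - 1).choose 2 + ((n - (m - 1)) / (l - 1)) * ((l - 1).choose 2)
    + ((n - (m - 1)) % (l - 1)).choose 2

/-- A graph is 2-connected if it has at least 3 vertices and removing any
single vertex leaves a connected graph. -/
def TwoConnected {V : Type*} [Fintype V] (G : SimpleGraph V) : Prop :=
  3 ≤ Fintype.card V ∧ ∀ v : V, (G.induce ({v}ᶜ : Set V)).Connected

/-- The circumference of a graph: the length of a longest cycle
(`0` if there is no cycle). -/
noncomputable def circumference {V : Type*} (G : SimpleGraph V) : ℕ :=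
  sSup {m | ∃ (v : V) (c : G.Walk v v), c.IsCycle ∧ c.length = m}

/-- The number of neighbours (in `G`) of `x` lying on the walk `p`. -/
noncomputable def degOn {V : Type*} (G : SimpleGraph V) {a b : V} (p : G.Walk a b) (x : V) : ℕ :=
  {v | v ∈ p.support ∧ G.Adj x v}.ncard

/-- The graph obtained from `G` by adding the edge `uv`. -/
def addEdge {V : Type*} (G : SimpleGraph V) (u v : V) : SimpleGraph V :=
  G ⊔ SimpleGraph.fromEdgeSet {s(u, v)}

/-- The minimum degree of a graph (with classical decidability). -/
noncomputable def minDeg {V : Type*} [Fintype V] (G : SimpleGraph V) : ℕ :=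
  @SimpleGraph.minDegree _ G _ (Classical.decRel _)

/-!
Enlarge `G` to an edge-maximal graph without a cycle of length at least `k`. Then any two
nonadjacent vertices are joined by a path on at least `k` vertices. By a lemma of Pósa and Kopylov,
such a path yields a long cycle as soon as its ends have at least `k` neighbours on it, counted
together: either the two neighbourhoods cross, and closing up around a tightest crossing gives the
cycle, or they do not, and the two halves are closed up along two disjoint paths provided by
2-connectedness. Prolonging the path inside cores, every vertex of the `c`-core is therefore
adjacent to every other vertex of the `d`-core once `c + d + 2 ≥ k`.

Hence the `⌊k/2⌋`-core `H` is a clique. If it is empty, put `d = ⌊k/2⌋`; otherwise put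
`d = k - |H|`, which lies between `2` and `⌊k/2⌋`. A vertex of the `d`-core is then adjacent to all
of the clique `H`, so it belongs to `H`. In both cases the `d`-core has at most `k - d` vertices, so
removing vertices of degree at most `d` until `k - d` are left shows `e(G) ≤ h(n, k, d)`, and
`h(n, k, ·)` is convex.
-/

section Walk

variable {V : Type*} {G : SimpleGraph V} {u v w : V}

theorem isPath_append_iff {p : G.Walk u v} {q : G.Walk v w} :
    (p.append q).IsPath ↔ p.IsPath ∧ q.IsPath ∧ ∀ x ∈ p.support, x ∈ q.support → x = v := by
  simp only [Walk.isPath_def, Walk.support_append, List.nodup_append', List.disjoint_left]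
  rw [← q.cons_tail_support]
  grind [p.end_mem_support]

theorem exists_append_eq_first_mem (p : G.Walk u v) (S : Set V) (h : ∃ x ∈ p.support, x ∈ S) :
    ∃ w ∈ S, ∃ (q : G.Walk u w) (r : G.Walk w v),
      q.append r = p ∧ ∀ x ∈ q.support, x ∈ S → x = w := by
  induction p with
  | @nil u => exact ⟨u, by simpa using h, .nil, .nil, rfl, by simp⟩
  | @cons u _ _ hadj p ih =>
    by_cases hu : u ∈ S
    · exact ⟨u, hu, .nil, p.cons hadj, rfl, by simp⟩
    · obtain ⟨w, hw, q, r, rfl, hq⟩ := ih (by simpa [hu] using h)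
      exact ⟨w, hw, q.cons hadj, r, rfl, by simpa [hu] using hq⟩

theorem exists_append_eq_last_mem (p : G.Walk u v) (S : Set V)
    (h : ∃ x ∈ p.support, x ∈ S) :
    ∃ w ∈ S, ∃ (q : G.Walk u w) (r : G.Walk w v),
      q.append r = p ∧ ∀ x ∈ r.support, x ∈ S → x = w := by
  obtain ⟨w, hw, q, r, hqr, hq⟩ := exists_append_eq_first_mem p.reverse S (by simpa using h)
  refine ⟨w, hw, r.reverse, q.reverse, ?_, by simpa using hq⟩
  rw [← Walk.reverse_append, hqr, Walk.reverse_reverse]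

end Walk

section LongCycle

variable {V : Type*} {G : SimpleGraph V} {k : ℕ}

/-- `G` has a cycle of length at least `k`, that is, its circumference is at least `k`. -/
def HasLongCycle (G : SimpleGraph V) (k : ℕ) : Prop :=
  ∃ (v : V) (c : G.Walk v v), c.IsCycle ∧ k ≤ c.length

theorem hasLongCycle_of_isPath_of_adj {u v : V} {p : G.Walk u v} (hp : p.IsPath) (hk : 3 ≤ k)
    (hkp : k ≤ p.length + 1) (h : G.Adj v u) : HasLongCycle G k := by
  refine ⟨v, p.cons h, (p.cons_isCycle_iff h).2 ⟨hp, fun he ↦ ?_⟩, by simpa using hkp⟩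
  rw [Sym2.eq_swap] at he
  have := hp.length_eq_one_of_mem_edges he
  lia

theorem hasLongCycle_of_isPath_of_isPath {s t : V} {p : G.Walk s t} {q : G.Walk t s} {S : Set V}
    (hp : p.IsPath) (hq : q.IsPath) (hst : s ≠ t)
    (hpq : ∀ x ∈ p.support, x ∈ q.support → x = s ∨ x = t)
    (hS : ∀ x ∈ S, x ∈ p.support ∨ x ∈ q.support) (hk : 3 ≤ k) (hkS : k ≤ S.ncard) :
    HasLongCycle G k := by
  classical
  have hsp : s ∉ p.support.tail := (List.nodup_cons.1 (p.cons_tail_support ▸ hp.support_nodup)).1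
  have htq : t ∉ q.support.tail := (List.nodup_cons.1 (q.cons_tail_support ▸ hq.support_nodup)).1
  have hsub : S ⊆ ((p.support.tail ++ q.support.tail).toFinset : Set V) := fun x hx ↦ by
    have htp := p.mem_support_iff.1 p.end_mem_support
    have hsq := q.mem_support_iff.1 q.end_mem_support
    have := (hS x hx).imp p.mem_support_iff.1 q.mem_support_iff.1
    simp only [List.coe_toFinset, Set.mem_ofPred, List.mem_append]
    grind
  have hcard : k ≤ p.length + q.length := calc
    k ≤ ((p.support.tail ++ q.support.tail).toFinset : Set V).ncard :=
        hkS.trans (Set.ncard_le_ncard hsub)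
    _ = (p.support.tail ++ q.support.tail).toFinset.card := Set.ncard_coe_finset _
    _ ≤ p.length + q.length := by
        simpa using (p.support.tail ++ q.support.tail).toFinset_card_le
  refine ⟨s, p.append q, hp.isCycle_append hq (fun x hxp hxq ↦ ?_) (by lia), by simpa using hcard⟩
  rcases hpq x (List.mem_of_mem_tail hxp) (List.mem_of_mem_tail hxq) with rfl | rfl
  exacts [hsp hxp, htq hxq]

end LongCycle

section TwoConnected

variable {V : Type*} [Fintype V] {G H : SimpleGraph V}

namespace TwoConnected

theorem mono (hG : TwoConnected G) (h : G ≤ H) : TwoConnected H :=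
  ⟨hG.1, fun v ↦ (hG.2 v).mono (by exact comap_monotone _ h)⟩

theorem exists_isPath_notMem (hG : TwoConnected G) {c s t : V} (hs : s ≠ c) (ht : t ≠ c) :
    ∃ p : G.Walk s t, p.IsPath ∧ c ∉ p.support := by
  obtain ⟨p, hp⟩ := (hG.2 c).exists_isPath ⟨s, Set.mem_compl_singleton_iff.2 hs⟩
    ⟨t, Set.mem_compl_singleton_iff.2 ht⟩
  refine ⟨_, hp.map (f := (Embedding.induce ({c}ᶜ : Set V)).toHom) Subtype.val_injective,
    fun hc ↦ ?_⟩
  obtain ⟨x, -, hx⟩ := List.mem_map.1 (p.support_map _ ▸ hc)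
  exact x.2 hx

theorem exists_adj_ne (hG : TwoConnected G) {c s : V} (hs : s ≠ c) :
    ∃ t, G.Adj s t ∧ t ≠ c := by
  obtain ⟨u, hus, huc⟩ := ENat.exists_ne_ne_of_three_le (by simpa using hG.1) s c
  obtain ⟨p, -, hcp⟩ := hG.exists_isPath_notMem hs huc
  have hp : ¬ p.Nil := Walk.not_nil_of_ne hus.symm
  exact ⟨p.snd, p.adj_snd hp, fun h ↦ hcp (h ▸ p.getVert_mem_support 1)⟩

end TwoConnected

end TwoConnected

section Linkage

variable {V : Type*} {G : SimpleGraph V} {X Y : Set V} {a b u v w : V}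

/-- An `X`–`Y` path: a path that meets `X` exactly in its first vertex and `Y` exactly in its
last vertex. -/
structure IsPathBetween (p : G.Walk u v) (X Y : Set V) : Prop where
  isPath : p.IsPath
  mem_left_iff : ∀ x ∈ p.support, x ∈ X ↔ x = u
  mem_right_iff : ∀ x ∈ p.support, x ∈ Y ↔ x = v

theorem isPathBetween_nil (hX : u ∈ X) (hY : u ∈ Y) : IsPathBetween (.nil : G.Walk u u) X Y :=
  ⟨.nil, by simpa using hX, by simpa using hY⟩

theorem IsPathBetween.of_append_right {p : G.Walk u v} {q : G.Walk v w}
    (h : IsPathBetween (p.append q) X Y) : IsPathBetween q {v} Y :=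
  ⟨h.isPath.of_append_right, by simp, fun x hx ↦ h.mem_right_iff x (by simp [hx])⟩

theorem IsPathBetween.append {p : G.Walk u v} {q : G.Walk v w} {Z : Set V}
    (hp : IsPathBetween p X Z) (hq : IsPathBetween q {v} Y) (hqX : ∀ x ∈ q.support, x ∈ X → x = v)
    (hqZ : ∀ x ∈ q.support, x ∈ Z) (hYZ : Y ⊆ Z) : IsPathBetween (p.append q) X Y where
  isPath := isPath_append_iff.2
    ⟨hp.isPath, hq.isPath, fun x hxp hxq ↦ (hp.mem_right_iff x hxp).1 (hqZ x hxq)⟩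
  mem_left_iff x hx := by
    have := hp.mem_left_iff
    have := hp.mem_right_iff
    grind [Walk.mem_support_append_iff, Walk.start_mem_support, Walk.end_mem_support]
  mem_right_iff x hx := by
    have := hp.mem_right_iff
    have := hq.mem_right_iff
    grind [Walk.mem_support_append_iff, Walk.start_mem_support, Walk.end_mem_support]

theorem exists_isPathBetween_of_isPath {p : G.Walk u v} (hp : p.IsPath) (hu : u ∈ X) (hv : v ∈ Y) :
    ∃ (u' v' : V) (q : G.Walk u' v'), IsPathBetween q X Y ∧ q.support ⊆ p.support := by
  obtain ⟨v', hv', q, r, rfl, hq⟩ := exists_append_eq_first_mem p Y ⟨v, by simp, hv⟩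
  obtain ⟨u', hu', s, t, rfl, ht⟩ := exists_append_eq_last_mem q X ⟨u, by simp, hu⟩
  refine ⟨u', v', t, ⟨hp.of_append_left.of_append_right, fun x hx ↦ ⟨ht x hx, ?_⟩,
    fun x hx ↦ ⟨hq x ?_, ?_⟩⟩, fun x hx ↦ ?_⟩ <;> grind [Walk.mem_support_append_iff]

/-- There are two vertex-disjoint `X`–`Y` paths such that `a` is the first vertex of one of them
and `b` is the last vertex of one of them, possibly of the other one. -/
def IsLinked (G : SimpleGraph V) (X Y : Set V) (a b : V) : Prop :=
  ∃ (u v u' v' : V) (p : G.Walk u v) (p' : G.Walk u' v'), IsPathBetween p X Y ∧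
    IsPathBetween p' X Y ∧ p.support.Disjoint p'.support ∧ (a = u ∨ a = u') ∧ (b = v ∨ b = v')

theorem IsPathBetween.exists_isPathBetween_of_mem {p : G.Walk u v} (hp : IsPathBetween p {u} Y)
    (hw : w ∈ p.support) (hwu : w ≠ u) :
    ∃ q : G.Walk w v, IsPathBetween q {w} Y ∧ q.support ⊆ p.support ∧ u ∉ q.support := by
  obtain ⟨q, r, rfl⟩ := Walk.mem_support_iff_exists_append.1 hw
  have hqr := isPath_append_iff.1 hp.isPath
  exact ⟨r, hp.of_append_right, by simp,
    fun hu ↦ hwu (hqr.2.2 u q.start_mem_support hu).symm⟩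

theorem exists_isPathBetween_of_fork {v₁ v₂ z : V} {p₁ : G.Walk w v₁} {p₂ : G.Walk w v₂}
    (hp₁ : IsPathBetween p₁ {w} Y) (hp₂ : IsPathBetween p₂ {w} Y)
    (hp : ∀ x ∈ p₁.support, x ∈ p₂.support → x = w) (hzw : z ≠ w)
    (hz : z ∈ p₁.support ∨ z ∈ p₂.support ∨ z ∈ Y) :
    ∃ (s t : V) (q : G.Walk w s) (r : G.Walk z t), IsPathBetween q {w} Y ∧ IsPathBetween r {z} Y ∧
      q.support.Disjoint r.support ∧ (v₁ = s ∨ v₁ = t) ∧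
      (∀ x ∈ q.support, x ∈ p₁.support ∨ x ∈ p₂.support) ∧
      (∀ x ∈ r.support, x = z ∨ x ∈ p₁.support ∨ x ∈ p₂.support) := by
  by_cases hz₁ : z ∈ p₁.support
  · obtain ⟨r, hr, hrp, hwr⟩ := hp₁.exists_isPathBetween_of_mem hz₁ hzw
    exact ⟨v₂, v₁, p₂, r, hp₂, hr, fun x hx hxr ↦ hwr (hp x (hrp hxr) hx ▸ hxr), .inr rfl,
      fun x hx ↦ .inr hx, fun x hx ↦ .inr (.inl (hrp hx))⟩
  by_cases hz₂ : z ∈ p₂.support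
  · obtain ⟨r, hr, hrp, hwr⟩ := hp₂.exists_isPathBetween_of_mem hz₂ hzw
    exact ⟨v₁, v₂, p₁, r, hp₁, hr, fun x hx hxr ↦ hwr (hp x hx (hrp hxr) ▸ hxr), .inl rfl,
      fun x hx ↦ .inl hx, fun x hx ↦ .inr (.inr (hrp hx))⟩
  · have hzY : z ∈ Y := by simpa [hz₁, hz₂] using hz
    exact ⟨v₁, z, p₁, .nil, hp₁, isPathBetween_nil rfl hzY, by simpa using hz₁, .inl rfl,
      fun x hx ↦ .inl hx, by simp⟩

theorem IsLinked.of_fork {c d : V} {p : G.Walk w b} {r : G.Walk w d} (hp : IsPathBetween p {w} Y)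
    (hr : IsPathBetween r {w} Y) (hpr : ∀ x ∈ p.support, x ∈ r.support → x = w)
    (hX : ∀ x, x ∈ p.support ∨ x ∈ r.support → x ∈ X → x = w)
    (h : IsLinked G X ({x | x ∈ p.support ∨ x ∈ r.support} ∪ Y) c w) : IsLinked G X Y c b := by
  obtain ⟨u, v, u', z, q, q', hq, hq', hqq', hc, hw⟩ := h
  wlog hwv : w = v generalizing u v u' z
  · exact this u' z u v q' q hq' hq hqq'.symm hc.symm hw.symm (hw.resolve_left hwv)
  subst hwv
  have hzw : z ≠ w := fun h ↦ hqq' q.end_mem_support (h ▸ q'.end_mem_support)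
  have hz := (hq'.mem_right_iff z q'.end_mem_support).2 rfl
  obtain ⟨s, t, f, g, hf, hg, hfg, hb, hf', hg'⟩ :=
    exists_isPathBetween_of_fork hp hr hpr hzw (by simpa [or_assoc] using hz)
  have hwg : w ∉ g.support := hfg f.start_mem_support
  have hfZ : ∀ x ∈ f.support, x ∈ ({x | x ∈ p.support ∨ x ∈ r.support} ∪ Y : Set V) :=
    fun x hx ↦ .inl (hf' x hx)
  have hgZ : ∀ x ∈ g.support, x ∈ ({x | x ∈ p.support ∨ x ∈ r.support} ∪ Y : Set V) :=
    fun x hx ↦ (hg' x hx).elim (· ▸ hz) .inl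
  refine ⟨u, s, u', t, q.append f, q'.append g,
    hq.append hf (fun x hx ↦ hX x (hf' x hx)) hfZ Set.subset_union_right,
    hq'.append hg (fun x hx hxX ↦ (hg' x hx).resolve_right fun h ↦ hwg (hX x h hxX ▸ hx))
      hgZ Set.subset_union_right, fun x hxq hxq' ↦ ?_, hc, hb⟩
  rcases (Walk.mem_support_append_iff ..).1 hxq with hx | hx <;>
    rcases (Walk.mem_support_append_iff ..).1 hxq' with hx' | hx'
  · exact hqq' hx hx'
  · exact hwg ((hq.mem_right_iff x hx).1 (hgZ x hx') ▸ hx')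
  · exact hfg hx ((hq'.mem_right_iff x hx').1 (hfZ x hx) ▸ g.start_mem_support)
  · exact hfg hx hx'

theorem TwoConnected.isLinked [Fintype V] (hG : TwoConnected G) {p : G.Walk a b}
    (hp : IsPathBetween p X Y) (hX : X.Nontrivial) (hY : Y.Nontrivial) : IsLinked G X Y a b := by
  induction h : p.length using Nat.strong_induction_on generalizing b Y with
  | _ n ih =>
    obtain ⟨x, hx, hxb⟩ := hX.exists_ne b
    obtain ⟨y, hy, hyb⟩ := hY.exists_ne b
    obtain ⟨r₀, hr₀, hbr₀⟩ := hG.exists_isPath_notMem hxb hyb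
    obtain ⟨c, d, r, hr, hrr₀⟩ := exists_isPathBetween_of_isPath hr₀ hx hy
    have hbr : b ∉ r.support := fun h ↦ hbr₀ (hrr₀ h)
    by_cases hpr : p.support.Disjoint r.support
    · exact ⟨a, b, c, d, p, r, hp, hr, hpr, .inl rfl, .inl rfl⟩
    obtain ⟨w, hwp, r₁, r₂, rfl, hr₂⟩ := exists_append_eq_last_mem r {x | x ∈ p.support}
      (by simpa [List.Disjoint, and_comm] using hpr)
    obtain ⟨p₁, p₂, rfl⟩ := Walk.mem_support_iff_exists_append.1 hwp
    have hp₁₂ := isPath_append_iff.1 hp.isPath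
    have hr₁₂ := isPath_append_iff.1 hr.isPath
    have hwb : w ≠ b := by
      rintro rfl
      exact hbr (by simp)
    -- Linking `X` to `Y ∪ p₂ ∪ r₂` along the shorter path `p₁`, one of the two paths ends at the
    -- fork `w`; it is prolonged along `p₂` or `r₂`, whichever the other path does not use.
    refine IsLinked.of_fork hp.of_append_right hr.of_append_right
      (fun x hx hxr ↦ hr₂ x hxr (by simp [hx])) ?_
      (ih p₁.length ?_ ⟨hp₁₂.1, fun x hx ↦ hp.mem_left_iff x (by simp [hx]), ?_⟩
        (hY.mono Set.subset_union_right) rfl)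
    · rintro x (hx | hx) hxX
      · have := (hp.mem_left_iff x (by simp [hx])).1 hxX
        exact hp₁₂.2.2 x (this ▸ p₁.start_mem_support) hx
      · have := (hr.mem_left_iff x (by simp [hx])).1 hxX
        exact hr₁₂.2.2 x (this ▸ r₁.start_mem_support) hx
    · have : ¬ p₂.Nil := Walk.not_nil_of_ne hwb
      have := Walk.not_nil_iff_lt_length.1 this
      simp only [Walk.length_append] at h
      lia
    · have := hp.mem_right_iff
      grind [Walk.mem_support_append_iff, Walk.start_mem_support, Walk.end_mem_support]

end Linkage

section PathLemma

variable {V : Type*} {G : SimpleGraph V} {k : ℕ} {a b u v w x y : V}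

theorem exists_detour_of_mem {p : G.Walk x a} (hp : p.IsPath) (hxa : G.Adj x a)
    (hw : w ∈ p.support) (hwa : w ≠ a) :
    ∃ q : G.Walk w a, q.IsPath ∧ q.support ⊆ p.support ∧ x ∈ q.support ∧
      ∀ z ∈ p.support, G.Adj x z → z ∈ q.support := by
  obtain ⟨s, t, rfl⟩ := Walk.mem_support_iff_exists_append.1 hw
  obtain ⟨w₁, hadj, t, rfl⟩ := Walk.exists_eq_cons_of_ne hwa t
  obtain ⟨c, hc, f, g, rfl, hf⟩ := exists_append_eq_first_mem t {z | G.Adj x z}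
    ⟨a, t.end_mem_support, hxa⟩
  have hst := isPath_append_iff.1 hp
  have hsg : ∀ z ∈ s.support, z ∉ g.support := by
    intro z hzs hzg
    have := hst.2.2 z hzs (by simp [hzg])
    exact ((Walk.cons_isPath_iff ..).1 hst.2.1).2 (by simp [← this, hzg])
  -- Go back along `p` from `w` to `x`, jump to the first neighbour `c` of `x` beyond `w`, and
  -- follow `p` from there.
  refine ⟨s.reverse.append (g.cons hc), isPath_append_iff.2
    ⟨hst.1.reverse, hst.2.1.of_cons.of_append_right.cons (hsg x s.start_mem_support), ?_⟩, ?_,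
    by simp, ?_⟩
  · simpa using fun z hzs hz ↦ hz.resolve_right (hsg z hzs)
  · intro z
    simp only [Walk.mem_support_append_iff, Walk.support_cons, Walk.support_reverse,
      List.mem_reverse, List.mem_cons]
    grind [Walk.start_mem_support]
  · intro z hz hxz
    have hfg : z ∈ f.support → z ∈ g.support := fun hzf ↦ hf z hzf hxz ▸ g.start_mem_support
    simp only [Walk.mem_support_append_iff, Walk.support_cons, Walk.support_reverse,
      List.mem_reverse, List.mem_cons] at hz ⊢
    grind [Walk.end_mem_support]

theorem exists_detour {p : G.Walk x a} (hp : p.IsPath) (hxa : G.Adj x a)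
    (hu : u ∈ p.support) (hv : v ∈ p.support) (huv : u ≠ v) (ha : a = u ∨ a = v) :
    ∃ q : G.Walk u v, q.IsPath ∧ q.support ⊆ p.support ∧ x ∈ q.support ∧
      ∀ z ∈ p.support, G.Adj x z → z ∈ q.support := by
  rcases ha with rfl | rfl
  · obtain ⟨q, hq, hqp, hxq, hz⟩ := exists_detour_of_mem hp hxa hv huv.symm
    exact ⟨q.reverse, hq.reverse, by simpa using hqp, by simpa using hxq, by simpa using hz⟩
  · exact exists_detour_of_mem hp hxa hu huv

theorem hasLongCycle_of_isPathBetween {X Y S : Set V} {u v u' v' : V} {p : G.Walk u v}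
    {p' : G.Walk u' v'} {q : G.Walk u' u} {r : G.Walk v v'} (hp : IsPathBetween p X Y)
    (hp' : IsPathBetween p' X Y) (hpp' : p.support.Disjoint p'.support) (hq : q.IsPath)
    (hr : r.IsPath) (hqX : ∀ z ∈ q.support, z ∈ X) (hrY : ∀ z ∈ r.support, z ∈ Y)
    (hXY : ∀ z ∈ X, z ∈ Y → z = u ∨ z = u') (hS : ∀ z ∈ S, z ∈ q.support ∨ z ∈ r.support)
    (hk : 3 ≤ k) (hkS : k ≤ S.ncard) : HasLongCycle G k := by
  refine hasLongCycle_of_isPath_of_isPath (S := S) (p := q.append p) (q := r.append p'.reverse)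
    ?_ ?_ ?_ ?_ (fun z hz ↦ ?_) hk hkS
  · exact isPath_append_iff.2
      ⟨hq, hp.isPath, fun z hzq hzp ↦ (hp.mem_left_iff z hzp).1 (hqX z hzq)⟩
  · exact isPath_append_iff.2 ⟨hr, hp'.isPath.reverse, fun z hzr hzp' ↦
      (hp'.mem_right_iff z (by simpa using hzp')).1 (hrY z hzr)⟩
  · rintro rfl
    exact hpp' p.end_mem_support p'.start_mem_support
  · simp only [Walk.mem_support_append_iff, Walk.support_reverse, List.mem_reverse]
    rintro z (hzq | hzp) (hzr | hzp')
    · rcases hXY z (hqX z hzq) (hrY z hzr) with rfl | rfl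
      exacts [.inr ((hp.mem_right_iff _ p.start_mem_support).1 (hrY _ hzr)), .inl rfl]
    · exact .inl ((hp'.mem_left_iff z hzp').1 (hqX z hzq))
    · exact .inr ((hp.mem_right_iff z hzp).1 (hrY z hzr))
    · exact (hpp' hzp hzp').elim
  · simp only [Walk.mem_support_append_iff]
    exact (hS z hz).imp .inl .inl

theorem ncard_add_ncard_le_ncard_insert_union [Finite V] {S T : Set V} (hx : x ∉ S)
    (hST : insert x S ∩ T ⊆ {a}) : S.ncard + T.ncard ≤ (insert x S ∪ T).ncard := by
  have hxS : (insert x S).ncard = S.ncard + 1 := Set.ncard_insert_of_notMem hx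
  have hcard := Set.ncard_le_ncard hST
  have hunion := Set.ncard_union_add_ncard_inter (insert x S) T
  rw [Set.ncard_singleton] at hcard
  lia

theorem hasLongCycle_of_noncrossing [Fintype V] (hG : TwoConnected G) {p : G.Walk x a}
    {q : G.Walk a b} {r : G.Walk b y} (h : (p.append (q.append r)).IsPath) (hxa : G.Adj x a)
    (hyb : G.Adj y b) {S T : Set V}
    (hS : ∀ z ∈ S, z ∈ p.support ∧ G.Adj x z) (hT : ∀ z ∈ T, z ∈ r.support ∧ G.Adj y z)
    (hk : 3 ≤ k) (hkST : k ≤ S.ncard + T.ncard) : HasLongCycle G k := by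
  obtain ⟨hp, hqr, hpqr⟩ := isPath_append_iff.1 h
  obtain ⟨hq, hr, hqr⟩ := isPath_append_iff.1 hqr
  have hpq : ∀ z ∈ p.support, z ∈ q.support → z = a := fun z hz hzq ↦ hpqr z hz (by simp [hzq])
  have hpr : ∀ z ∈ p.support, z ∈ r.support → z = a := fun z hz hzr ↦ hpqr z hz (by simp [hzr])
  have hbet : IsPathBetween q {z | z ∈ p.support} {z | z ∈ r.support} :=
    ⟨hq, fun z hz ↦ ⟨fun hzp ↦ hpq z hzp hz, fun hza ↦ hza ▸ p.end_mem_support⟩,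
      fun z hz ↦ ⟨fun hzr ↦ hqr z hz hzr, fun hzb ↦ hzb ▸ r.start_mem_support⟩⟩
  obtain ⟨u, v, u', v', A, B, hA, hB, hAB, ha, hb⟩ := hG.isLinked hbet
    ⟨x, p.start_mem_support, a, p.end_mem_support, hxa.ne⟩
    ⟨y, r.end_mem_support, b, r.start_mem_support, hyb.ne⟩
  have hu : u ∈ p.support := (hA.mem_left_iff u A.start_mem_support).2 rfl
  have hu' : u' ∈ p.support := (hB.mem_left_iff u' B.start_mem_support).2 rfl
  have hv : v ∈ r.support := (hA.mem_right_iff v A.end_mem_support).2 rfl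
  have hv' : v' ∈ r.support := (hB.mem_right_iff v' B.end_mem_support).2 rfl
  have huu' : u' ≠ u := fun h ↦ hAB A.start_mem_support (h ▸ B.start_mem_support)
  have hvv' : v ≠ v' := fun h ↦ hAB A.end_mem_support (h ▸ B.end_mem_support)
  obtain ⟨L, hL, hLp, hxL, hSL⟩ := exists_detour hp hxa hu' hu huu' ha.symm
  obtain ⟨R, hR, hRr, -, hTR⟩ := exists_detour hr.reverse hyb
    (by simpa using hv) (by simpa using hv') hvv' hb
  simp only [Walk.support_reverse, List.mem_reverse, List.subset_def] at hTR hRr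
  refine hasLongCycle_of_isPathBetween (S := insert x S ∪ T) hA hB hAB hL hR (fun z hz ↦ hLp hz)
    (fun z hz ↦ hRr hz) (fun z hz hzr ↦ hpr z hz hzr ▸ ha) (by grind) hk (hkST.trans ?_)
  refine ncard_add_ncard_le_ncard_insert_union (a := a) (fun hx ↦ (hS x hx).2.ne rfl) ?_
  rintro z ⟨rfl | hz, hzT⟩
  exacts [hpr z p.start_mem_support (hT z hzT).1, hpr z (hS z hz).1 (hT z hzT).1]

theorem exists_lt_card_add_card_le {I J : Finset ℕ} {n : ℕ} (hI : ∀ i ∈ I, 0 < i ∧ i ≤ n)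
    (hJ : ∀ j ∈ J, j < n) (h : ∃ j ∈ J, ∃ i ∈ I, j < i) :
    ∃ j ∈ J, ∃ i ∈ I, j < i ∧ (i = j + 1 ∨ I.card + J.card ≤ (j + 1) + (n + 1 - i)) := by
  classical
  have hgap : ∃ g, ∃ j ∈ J, ∃ i ∈ I, j < i ∧ i - j = g := by grind
  obtain ⟨j, hj, i, hi, hji, hg⟩ := Nat.find_spec hgap
  have hmin : ∀ j' ∈ J, ∀ i' ∈ I, j' < i' → i - j ≤ i' - j' := fun j' hj' i' hi' hlt ↦
    hg ▸ Nat.find_min' hgap ⟨j', hj', i', hi', hlt, rfl⟩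
  refine ⟨j, hj, i, hi, hji, or_iff_not_imp_left.2 fun hne ↦ ?_⟩
  have hIgap : ∀ i' ∈ I, i' ≤ j ∨ i ≤ i' := fun i' hi' ↦ by
    have := hmin j hj i' hi'
    lia
  have hJgap : ∀ j' ∈ J, j' ≤ j ∨ i ≤ j' := fun j' hj' ↦ by
    have := hmin j' hj' i hi
    lia
  have hdisj : Disjoint (I.image (· - 1)) J := by
    rw [Finset.disjoint_left, Finset.forall_mem_image]
    intro i' hi' hj'
    have := hI i' hi'
    have := hmin (i' - 1) hj' i' hi'
    lia
  have hsub : I.image (· - 1) ∪ J ⊆ Finset.range (j + 1) ∪ Finset.Ico (i - 1) n := by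
    refine Finset.union_subset (Finset.image_subset_iff.2 fun i' hi' ↦ ?_) fun j' hj' ↦ ?_ <;>
      simp only [Finset.mem_union, Finset.mem_range, Finset.mem_Ico]
    · have := hI i' hi'
      have := hIgap i' hi'
      lia
    · have := hJ j' hj'
      have := hJgap j' hj'
      lia
  have hin := hI i hi
  calc
    I.card + J.card = (I.image (· - 1) ∪ J).card := by
      rw [Finset.card_union_of_disjoint hdisj, Finset.card_image_of_injOn]
      exact fun i₁ h₁ i₂ h₂ h ↦ Nat.pred_inj (hI i₁ h₁).1 (hI i₂ h₂).1 h
    _ ≤ (Finset.range (j + 1) ∪ Finset.Ico (i - 1) n).card := Finset.card_le_card hsub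
    _ ≤ (j + 1) + (n - (i - 1)) := by
      simpa using Finset.card_union_le (Finset.range (j + 1)) (Finset.Ico (i - 1) n)
    _ = (j + 1) + (n + 1 - i) := by lia

theorem hasLongCycle_of_crossing {p : G.Walk x y} (hp : p.IsPath) {i j : ℕ} (hji : j < i)
    (hi : i ≤ p.length) (hxi : G.Adj x (p.getVert i)) (hyj : G.Adj y (p.getVert j)) (hk : 3 ≤ k)
    (hkp : k ≤ (j + 1) + (p.length + 1 - i)) : HasLongCycle G k := by
  have hdisj : ∀ z ∈ (p.take j).support, z ∉ (p.drop i).support := by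
    intro z hz hz'
    obtain ⟨m, rfl, hm⟩ := Walk.mem_support_iff_exists_getVert.1 hz
    obtain ⟨m', h, hm'⟩ := Walk.mem_support_iff_exists_getVert.1 hz'
    simp only [Walk.take_getVert, Walk.drop_getVert, Walk.take_length, Walk.drop_length] at *
    have := hp.getVert_injOn (show i + m' ≤ p.length by lia) (show min j m ≤ p.length by lia) h
    lia
  refine hasLongCycle_of_isPath_of_adj (p := (p.take j).append ((p.drop i).reverse.cons hyj.symm))
    (isPath_append_iff.2 ⟨hp.take j, (hp.drop i).reverse.cons ?_, ?_⟩) hk ?_ hxi.symm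
  · simpa using hdisj _ (p.take j).end_mem_support
  · intro z hz
    rw [Walk.support_cons, List.mem_cons, Walk.support_reverse, List.mem_reverse]
    exact fun h ↦ h.resolve_right (hdisj z hz)
  · simp only [Walk.length_append, Walk.length_cons, Walk.length_reverse, Walk.take_length,
      Walk.drop_length]
    lia

theorem degOn_eq_card_filter_getVert [DecidableRel G.Adj] {p : G.Walk x y} (hp : p.IsPath)
    (z : V) :
    degOn G p z = ((Finset.range (p.length + 1)).filter fun i ↦ G.Adj z (p.getVert i)).card := by
  rw [← Set.ncard_coe_finset, ← Set.InjOn.ncard_image (f := p.getVert), degOn]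
  · congr 1
    ext v
    simp only [Walk.mem_support_iff_exists_getVert, Finset.coe_filter, Finset.mem_range,
      Set.mem_ofPred, Set.mem_image]
    grind
  · refine hp.getVert_injOn.mono fun i hi ↦ ?_
    simp only [Finset.coe_filter, Finset.mem_range, Set.mem_ofPred] at hi ⊢
    lia

theorem hasLongCycle_of_exists_crossing {p : G.Walk x y} (hp : p.IsPath) (hk : 3 ≤ k)
    (hkp : k ≤ p.length + 1) (hdeg : k ≤ degOn G p x + degOn G p y)
    (h : ∃ i ≤ p.length, G.Adj x (p.getVert i) ∧ ∃ j < i, G.Adj y (p.getVert j)) :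
    HasLongCycle G k := by
  classical
  let neighborIndices z := (Finset.range (p.length + 1)).filter fun i ↦ G.Adj z (p.getVert i)
  have hmem {z i} : i ∈ neighborIndices z ↔ i ≤ p.length ∧ G.Adj z (p.getVert i) := by
    simp [neighborIndices]
  obtain ⟨j, hj, i, hi, hji, hij⟩ : ∃ j ∈ neighborIndices y, ∃ i ∈ neighborIndices x, j < i ∧
      (i = j + 1 ∨ degOn G p x + degOn G p y ≤ (j + 1) + (p.length + 1 - i)) := by
    rw [degOn_eq_card_filter_getVert hp, degOn_eq_card_filter_getVert hp]
    refine exists_lt_card_add_card_le (fun i hi ↦ ⟨?_, (hmem.1 hi).1⟩) (fun j hj ↦ ?_) ?_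
    · refine Nat.pos_of_ne_zero fun h ↦ ?_
      simpa [h] using (hmem.1 hi).2
    · refine (hmem.1 hj).1.lt_of_ne fun h ↦ ?_
      simpa [h] using (hmem.1 hj).2
    · obtain ⟨i, hi, hxi, j, hji, hyj⟩ := h
      exact ⟨j, hmem.2 ⟨by lia, hyj⟩, i, hmem.2 ⟨hi, hxi⟩, hji⟩
  rw [hmem] at hi hj
  exact hasLongCycle_of_crossing hp hji hi.1 hi.2 hj.2 hk (by lia)

theorem hasLongCycle_of_le_degOn_add_degOn [Fintype V] (hG : TwoConnected G) {p : G.Walk x y}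
    (hp : p.IsPath) (hk : 3 ≤ k) (hkp : k ≤ p.length + 1) (hdeg : k ≤ degOn G p x + degOn G p y) :
    HasLongCycle G k := by
  by_cases hyx : G.Adj y x
  · exact hasLongCycle_of_isPath_of_adj hp hk hkp hyx
  by_cases hcross : ∃ i ≤ p.length, G.Adj x (p.getVert i) ∧ ∃ j < i, G.Adj y (p.getVert j)
  · exact hasLongCycle_of_exists_crossing hp hk hkp hdeg hcross
  have hnil : ¬ p.Nil := fun h ↦ by
    have := Walk.length_eq_zero_iff.2 h
    lia
  obtain ⟨a, hxa, q₁, r₁, rfl, hr₁⟩ := exists_append_eq_last_mem p {z | G.Adj x z}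
    ⟨p.snd, p.getVert_mem_support 1, p.adj_snd hnil⟩
  have hr₁nil : ¬ r₁.Nil := Walk.not_nil_of_ne fun h ↦ hyx (h ▸ hxa).symm
  obtain ⟨b, hyb, q, r, rfl, hq⟩ := exists_append_eq_first_mem r₁ {z | G.Adj y z}
    ⟨r₁.penultimate, r₁.getVert_mem_support _, (r₁.adj_penultimate hr₁nil).symm⟩
  have hq₁ : ∀ z ∈ q₁.support, G.Adj y z → z = a := by
    intro z hz hyz
    obtain ⟨j, rfl, hj⟩ := Walk.mem_support_iff_exists_getVert.1 hz
    by_contra hne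
    have hlt : j < q₁.length := hj.lt_of_ne fun h ↦ hne (by simp [h])
    refine hcross ⟨q₁.length, by simp, ?_, j, hlt, ?_⟩
    · simpa [Walk.getVert_append] using hxa
    · simpa [Walk.getVert_append, hlt] using hyz
  simp only [Walk.mem_support_append_iff, Set.mem_ofPred] at hr₁ hq
  refine hasLongCycle_of_noncrossing hG hp hxa hyb (S := {z | _ ∧ _}) (T := {z | _ ∧ _})
    (fun z ⟨hz, hxz⟩ ↦ ⟨?_, hxz⟩) (fun z ⟨hz, hyz⟩ ↦ ⟨?_, hyz⟩) hk hdeg <;>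
    simp only [Walk.mem_support_append_iff] at hz
  · exact hz.elim id fun h ↦ hr₁ z h hxz ▸ q₁.end_mem_support
  · have hb : z ∈ q.support → z ∈ r.support := fun h ↦ hq z h hyz ▸ r.start_mem_support
    rcases hz with h | h | h
    exacts [hb (hq₁ z h hyz ▸ q.start_mem_support), hb h, h]

end PathLemma

section Saturation

variable {V : Type*} {G : SimpleGraph V} {k : ℕ} {v x y : V}

theorem exists_isPath_of_mem_edges {c : G.Walk v v} (hc : c.IsCycle) (h : s(x, y) ∈ c.edges) :
    ∃ p : G.Walk x y, p.IsPath ∧ s(x, y) ∉ p.edges ∧ p.length + 1 = c.length := by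
  classical
  have hx : x ∈ c.support := c.fst_mem_support_of_mem_edges h
  replace h : s(x, y) ∈ (c.rotate x hx).edges := (c.rotate_edges x hx).mem_iff.2 h
  have hne : x ≠ y := (Walk.adj_of_mem_edges _ h).ne
  obtain ⟨q, r, hqr⟩ := Walk.mem_support_iff_exists_append.1
    ((c.rotate x hx).snd_mem_support_of_mem_edges h)
  have hcyc : (q.append r).IsCycle := hqr ▸ hc.rotate hx
  have hlen : q.length + r.length = c.length := by
    rw [← Walk.length_append, ← hqr, Walk.length_rotate]
  have hqp : q.IsPath := hcyc.isPath_of_append_left (Walk.not_nil_of_ne hne.symm)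
  have hrp : r.IsPath := hcyc.isPath_of_append_right (Walk.not_nil_of_ne hne)
  have hdisj : q.edges.Disjoint r.edges :=
    (List.nodup_append'.1 (Walk.edges_append q r ▸ hcyc.edges_nodup)).2.2
  rw [hqr, Walk.edges_append, List.mem_append] at h
  rcases h with h | h
  · have := hqp.length_eq_one_of_mem_edges h
    exact ⟨r.reverse, hrp.reverse, by simpa using hdisj h,
      by rw [Walk.length_reverse]; lia⟩
  · have := hrp.length_eq_one_of_mem_edges (Sym2.eq_swap ▸ h)
    exact ⟨q, hqp, fun hq ↦ hdisj hq h, by lia⟩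

theorem HasLongCycle.exists_isPath_of_sup_edge (h : HasLongCycle (G ⊔ edge x y) k)
    (hG : ¬ HasLongCycle G k) : ∃ p : G.Walk x y, p.IsPath ∧ k ≤ p.length + 1 := by
  obtain ⟨v, c, hc, hck⟩ := h
  have hedges {u w} (p : (G ⊔ edge x y).Walk u w) (hp : s(x, y) ∉ p.edges) :
      ∀ e ∈ p.edges, e ∈ G.edgeSet := by
    intro e he
    rcases edgeSet_sup .. ▸ p.edges_subset_edgeSet he with h | h
    · exact h
    · exact (hp (Set.mem_singleton_iff.1 (edgeSet_edge_subset h) ▸ he)).elim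
  by_cases hxy : s(x, y) ∈ c.edges
  · obtain ⟨p, hp, hpxy, hlen⟩ := exists_isPath_of_mem_edges hc hxy
    exact ⟨p.transfer G (hedges p hpxy), hp.transfer _,
      by rw [Walk.length_transfer]; lia⟩
  · exact (hG ⟨v, c.transfer G (hedges c hxy), hc.transfer _, by simpa using hck⟩).elim

theorem exists_isPath_of_maximal (hG : Maximal (fun H : SimpleGraph V ↦ ¬ HasLongCycle H k) G)
    (hne : x ≠ y) (hxy : ¬ G.Adj x y) : ∃ p : G.Walk x y, p.IsPath ∧ k ≤ p.length + 1 := by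
  refine HasLongCycle.exists_isPath_of_sup_edge (not_not.1 fun h ↦ hxy ?_) hG.prop
  exact hG.le_of_ge h le_sup_left (Or.inr ((edge_adj ..).2 ⟨.inl ⟨rfl, rfl⟩, hne⟩))

end Saturation

section Core

variable {V : Type*} {G : SimpleGraph V} {S T : Set V} {c d k : ℕ} {x y : V}

/-- The number of neighbours of `x` that lie in `S`; the vertex `x` itself need not belong
to `S`. -/
noncomputable def degIn (G : SimpleGraph V) (S : Set V) (x : V) : ℕ :=
  (S ∩ G.neighborSet x).ncard

/-- The `d`-core in Kopylov's sense: what remains of `G` after repeatedly deleting vertices of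
degree at most `d`, encoded as the largest set that induces a subgraph of minimum degree greater
than `d`. Many authors call this the `(d + 1)`-core. -/
def core (G : SimpleGraph V) (d : ℕ) : Set V :=
  ⋃₀ {S | ∀ x ∈ S, d < degIn G S x}

theorem degIn_mono [Finite V] (h : S ⊆ T) : degIn G S x ≤ degIn G T x :=
  Set.ncard_le_ncard (Set.inter_subset_inter_left _ h)

theorem lt_degIn_core [Finite V] (hx : x ∈ core G d) : d < degIn G (core G d) x := by
  obtain ⟨S, hS, hxS⟩ := hx
  exact (hS x hxS).trans_le (degIn_mono (Set.subset_sUnion_of_mem hS))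

theorem degIn_lt_ncard [Finite V] (hx : x ∈ S) : degIn G S x < S.ncard := by
  refine Set.ncard_lt_ncard ⟨Set.inter_subset_left, fun h ↦ ?_⟩
  exact G.irrefl (h hx).2

theorem exists_degIn_le_of_not_subset_core (h : ¬ S ⊆ core G d) : ∃ x ∈ S, degIn G S x ≤ d := by
  contrapose! h
  exact Set.subset_sUnion_of_mem h

theorem subset_core_of_isClique (hS : G.IsClique S) (hd : d + 1 < S.ncard) : S ⊆ core G d := by
  by_contra h
  obtain ⟨x, hx, hxd⟩ := exists_degIn_le_of_not_subset_core h
  have hsub : S \ {x} ⊆ S ∩ G.neighborSet x := fun y hy ↦ ⟨hy.1, hS hx hy.1 (Ne.symm hy.2)⟩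
  have hfin : S.Finite := Set.finite_of_ncard_pos (by lia)
  have hle := Set.ncard_le_ncard hsub (hfin.inter_of_left _)
  have := Set.ncard_sdiff_singleton_add_one hx hfin
  rw [degIn] at hxd
  lia

theorem TwoConnected.core_one [Fintype V] (hG : TwoConnected G) : core G 1 = Set.univ := by
  by_contra h
  obtain ⟨x, -, hx⟩ := exists_degIn_le_of_not_subset_core fun h' ↦ h (Set.univ_subset_iff.1 h')
  obtain ⟨u, hux⟩ := Fintype.exists_ne_of_one_lt_card (by linarith [hG.1]) x
  obtain ⟨y, hxy, -⟩ := hG.exists_adj_ne hux.symm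
  obtain ⟨z, hxz, hzy⟩ := hG.exists_adj_ne hxy.ne
  rw [degIn, Set.univ_inter] at hx
  exact hzy ((Set.ncard_le_one (Set.toFinite _)).1 hx z hxz y hxy)

theorem exists_adj_notMem_support_of_degOn_le [Finite V] {u v : V} {p : G.Walk u v}
    (hx : x ∈ core G d) (h : degOn G p x ≤ d) :
    ∃ z ∈ core G d, G.Adj x z ∧ z ∉ p.support := by
  by_contra! hp
  have : degIn G (core G d) x ≤ degOn G p x :=
    Set.ncard_le_ncard fun z hz ↦ ⟨hp z hz.1 hz.2, hz.2⟩
  have := lt_degIn_core hx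
  lia

theorem hasLongCycle_of_mem_core [Fintype V] (hG : TwoConnected G) {p : G.Walk x y}
    (hp : p.IsPath) (hx : x ∈ core G c) (hy : y ∈ core G d) (hk : 3 ≤ k)
    (hkp : k ≤ p.length + 1) (hcd : k ≤ (c + 1) + (d + 1)) : HasLongCycle G k := by
  induction h : Fintype.card V - p.length using Nat.strong_induction_on generalizing x y with
  | _ m ih =>
    have hlt := hp.length_lt
    by_cases hdx : degOn G p x ≤ c
    · obtain ⟨z, hz, hxz, hzp⟩ := exists_adj_notMem_support_of_degOn_le hx hdx
      refine ih _ ?_ (hp.cons (h := hxz.symm) hzp) hz hy ?_ rfl <;>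
        rw [Walk.length_cons] <;> lia
    by_cases hdy : degOn G p y ≤ d
    · obtain ⟨z, hz, hyz, hzp⟩ := exists_adj_notMem_support_of_degOn_le hy hdy
      refine ih _ ?_ (hp.concat hzp hyz) hx hz ?_ rfl <;>
        rw [Walk.length_concat] <;> lia
    exact hasLongCycle_of_le_degOn_add_degOn hG hp hk hkp (by lia)

theorem adj_of_mem_core [Fintype V] (hG : TwoConnected G)
    (hmax : Maximal (fun H : SimpleGraph V ↦ ¬ HasLongCycle H k) G) (hk : 3 ≤ k)
    (hx : x ∈ core G c) (hy : y ∈ core G d) (hcd : k ≤ (c + 1) + (d + 1)) (hxy : x ≠ y) :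
    G.Adj x y := by
  by_contra hadj
  obtain ⟨p, hp, hkp⟩ := exists_isPath_of_maximal hmax hxy hadj
  exact hmax.prop (hasLongCycle_of_mem_core hG hp hx hy hk hkp hcd)

theorem hasLongCycle_of_isClique (hS : G.IsClique S) (hk : 3 ≤ k) (hkS : k ≤ S.ncard) :
    HasLongCycle G k := by
  have hfin : S.Finite := Set.finite_of_ncard_pos (by lia)
  obtain ⟨s, rfl⟩ := hfin.exists_finset_coe
  rw [Set.ncard_coe_finset, ← s.length_toList] at hkS
  have hpair : s.toList.Pairwise G.Adj := s.nodup_toList.imp_of_mem fun hx hy hxy ↦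
    hS (Finset.mem_toList.1 hx) (Finset.mem_toList.1 hy) hxy
  have hne : s.toList ≠ [] := List.ne_nil_of_length_pos (by lia)
  have hnodup : (Walk.ofSupport s.toList hne hpair.isChain).support.Nodup := by
    simpa using s.nodup_toList
  have hlen := (Walk.ofSupport s.toList hne hpair.isChain).length_support
  rw [Walk.support_ofSupport] at hlen
  refine hasLongCycle_of_isPath_of_adj (.mk' hnodup) hk (by lia) (hS
    (Finset.mem_toList.1 (List.getLast_mem hne)) (Finset.mem_toList.1 (List.head_mem hne)) ?_)
  intro h
  obtain ⟨x, hx⟩ := (List.Nodup.head_eq_getLast_iff hne s.nodup_toList).1 h.symm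
  rw [hx, List.length_singleton] at hkS
  lia

end Core

section EdgeCount

variable {V : Type*} {G : SimpleGraph V} {S : Set V} {d k t : ℕ} {x : V}

/-- The number of edges of `G` with both ends in `S`. -/
noncomputable def edgeCountIn (G : SimpleGraph V) (S : Set V) : ℕ :=
  (G.edgeSet ∩ S.sym2).ncard

theorem edgeCountIn_univ : edgeCountIn G Set.univ = edgeCount G := by
  simp [edgeCountIn, edgeCount]

theorem edgeCountIn_le_add_degIn [Finite V] :
    edgeCountIn G S ≤ edgeCountIn G (S \ {x}) + degIn G S x := by
  have hsub : G.edgeSet ∩ S.sym2 ⊆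
      (G.edgeSet ∩ (S \ {x}).sym2) ∪ (s(x, ·)) '' (S ∩ G.neighborSet x) := by
    rintro ⟨u, v⟩ ⟨huv : G.Adj u v, hS⟩
    by_cases hu : u = x
    · exact .inr ⟨v, ⟨hS.2, hu ▸ huv⟩, by rw [← hu]⟩
    by_cases hv : v = x
    · exact .inr ⟨u, ⟨hS.1, hv ▸ huv.symm⟩, by rw [← hv]; exact Sym2.eq_swap⟩
    · exact .inl ⟨huv, ⟨hS.1, hu⟩, hS.2, hv⟩
  calc
    edgeCountIn G S
      ≤ (G.edgeSet ∩ (S \ {x}).sym2).ncard + ((s(x, ·)) '' (S ∩ G.neighborSet x)).ncard :=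
        (Set.ncard_le_ncard hsub).trans (Set.ncard_union_le _ _)
    _ ≤ edgeCountIn G (S \ {x}) + degIn G S x := Nat.add_le_add_left Set.ncard_image_le _

theorem edgeCountIn_le_choose_two [Finite V] (S : Set V) : edgeCountIn G S ≤ S.ncard.choose 2 := by
  induction h : S.ncard generalizing S with
  | zero =>
    rw [Set.ncard_eq_zero] at h
    simp [edgeCountIn, h]
  | succ n ih =>
    obtain ⟨x, hx⟩ := Set.nonempty_of_ncard_ne_zero (by lia : S.ncard ≠ 0)
    have hcard : (S \ {x}).ncard = n := by rw [Set.ncard_sdiff_singleton_of_mem hx]; lia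
    have hdeg : degIn G S x ≤ n := by
      have := degIn_lt_ncard (G := G) hx
      lia
    calc
      edgeCountIn G S ≤ edgeCountIn G (S \ {x}) + degIn G S x := edgeCountIn_le_add_degIn
      _ ≤ n.choose 2 + n := Nat.add_le_add (ih _ hcard) hdeg
      _ = (n + 1).choose 2 := by rw [Nat.choose_succ_succ, Nat.choose_one_right, add_comm]

theorem edgeCountIn_le_of_ncard_core_le [Finite V] (hcore : (core G d).ncard ≤ t)
    (ht : t ≤ S.ncard) : edgeCountIn G S ≤ t.choose 2 + d * (S.ncard - t) := by
  induction h : S.ncard - t generalizing S with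
  | zero => simpa [show S.ncard = t by lia] using edgeCountIn_le_choose_two (G := G) S
  | succ m ih =>
    have hS : ¬ S ⊆ core G d := fun hS ↦ by
      have := Set.ncard_le_ncard hS
      lia
    obtain ⟨x, hx, hxd⟩ := exists_degIn_le_of_not_subset_core hS
    have hcard := Set.ncard_sdiff_singleton_add_one hx
    calc
      edgeCountIn G S ≤ edgeCountIn G (S \ {x}) + degIn G S x := edgeCountIn_le_add_degIn
      _ ≤ (t.choose 2 + d * m) + d := Nat.add_le_add (ih (by lia) (by lia)) hxd
      _ = t.choose 2 + d * (m + 1) := by ring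

theorem edgeCount_le_hFun [Fintype V] (hk : k ≤ Fintype.card V) (hdk : d ≤ k)
    (hcore : (core G d).ncard ≤ k - d) : edgeCount G ≤ hFun (Fintype.card V) k d := by
  have huniv : (Set.univ : Set V).ncard = Fintype.card V := by simp
  have h := edgeCountIn_le_of_ncard_core_le (S := .univ) hcore (by lia)
  rw [edgeCountIn_univ, huniv] at h
  rwa [hFun, show Fintype.card V - k + d = Fintype.card V - (k - d) by lia]

end EdgeCount

theorem hFun_le_max {n k d l s : ℕ} (hl : l ≤ d) (hd : d ≤ s) (hs : s ≤ k) :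
    hFun n k d ≤ max (hFun n k s) (hFun n k l) := by
  let f : ℝ → ℝ := fun a ↦ (k - a) * (k - a - 1) / 2 + a * ((n - k : ℕ) + a)
  have hf {a : ℕ} (ha : a ≤ k) : (hFun n k a : ℝ) = f a := by
    simp [f, hFun, Nat.cast_choose_two, Nat.cast_sub ha]
  have hconv : ConvexOn ℝ Set.univ f := by
    refine ⟨convex_univ, fun x _ y _ a b ha hb hab ↦ ?_⟩
    obtain rfl : b = 1 - a := by linarith
    simp only [f, smul_eq_mul]
    linarith [mul_nonneg (mul_nonneg ha hb) (sq_nonneg (x - y))]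
  have := hconv.le_max_of_mem_Icc (Set.mem_univ (l : ℝ)) (Set.mem_univ (s : ℝ))
    (z := (d : ℝ)) ⟨by exact_mod_cast hl, by exact_mod_cast hd⟩
  rw [← hf (by lia), ← hf (by lia), ← hf (by lia), max_comm] at this
  exact_mod_cast this

section Kopylov

variable {V : Type*} [Fintype V] {G : SimpleGraph V} {k : ℕ}

theorem isClique_core_half (h2c : TwoConnected G)
    (hmax : Maximal (fun H : SimpleGraph V ↦ ¬ HasLongCycle H k) G) (hk : 3 ≤ k) :
    G.IsClique (core G (k / 2)) :=
  fun _ hx _ hy ↦ adj_of_mem_core h2c hmax hk hx hy (by lia)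

theorem core_subset_core_half (h2c : TwoConnected G)
    (hmax : Maximal (fun H : SimpleGraph V ↦ ¬ HasLongCycle H k) G) (hk : 3 ≤ k)
    (hcard : k / 2 + 2 ≤ (core G (k / 2)).ncard) :
    core G (k - (core G (k / 2)).ncard) ⊆ core G (k / 2) := by
  set H := core G (k / 2)
  have hclique : G.IsClique H := isClique_core_half h2c hmax hk
  have hsub : H ⊆ core G (H.ncard - 2) := subset_core_of_isClique hclique (by lia)
  intro x hx
  by_contra hxH
  have hinsert : G.IsClique (insert x H) := isClique_insert.2 ⟨hclique, fun y hy hne ↦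
    adj_of_mem_core h2c hmax hk hx (hsub hy) (by lia) hne⟩
  have hsub' : insert x H ⊆ core G (k / 2) := subset_core_of_isClique hinsert <| by
    rw [Set.ncard_insert_of_notMem hxH]
    lia
  exact hxH (hsub' (Set.mem_insert x H))

theorem edgeCount_le_of_maximal (h2c : TwoConnected G)
    (hmax : Maximal (fun H : SimpleGraph V ↦ ¬ HasLongCycle H k) G) (hk : 3 ≤ k)
    (hkn : k ≤ Fintype.card V) :
    edgeCount G ≤ max (hFun (Fintype.card V) k (k / 2)) (hFun (Fintype.card V) k 2) := by
  rcases (core G (k / 2)).eq_empty_or_nonempty with hempty | ⟨x, hx⟩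
  · exact le_max_of_le_left (edgeCount_le_hFun hkn (Nat.div_le_self k 2) (by simp [hempty]))
  have hlt : (core G (k / 2)).ncard < k := by
    by_contra! hle
    exact hmax.prop (hasLongCycle_of_isClique (isClique_core_half h2c hmax hk) hk hle)
  have hcard : k / 2 + 2 ≤ (core G (k / 2)).ncard := by
    have := lt_degIn_core hx
    have := degIn_lt_ncard (G := G) hx
    lia
  have hsub := core_subset_core_half h2c hmax hk hcard
  have h2 : 2 ≤ k - (core G (k / 2)).ncard := by
    by_contra! hd
    rw [show k - (core G (k / 2)).ncard = 1 by lia, h2c.core_one, Set.univ_subset_iff] at hsub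
    rw [hsub, Set.ncard_univ, Nat.card_eq_fintype_card] at hlt
    lia
  refine (edgeCount_le_hFun hkn (Nat.sub_le ..) ?_).trans (hFun_le_max h2 (by lia) (by lia))
  have := Set.ncard_le_ncard hsub
  lia

theorem kopylov_general (hk : 3 ≤ k) (hkn : k ≤ Fintype.card V) (h2c : TwoConnected G)
    (he : max (hFun (Fintype.card V) k (k / 2)) (hFun (Fintype.card V) k 2) < edgeCount G) :
    ∃ (v : V) (c : G.Walk v v), c.IsCycle ∧ k ≤ c.length := by
  by_contra hG
  obtain ⟨M, hGM, hmax⟩ := Finite.exists_le_maximal (p := fun H ↦ ¬ HasLongCycle H k) hG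
  have hle : edgeCount G ≤ edgeCount M := Set.ncard_le_ncard (edgeSet_mono hGM)
  exact (he.trans_le hle).not_ge (edgeCount_le_of_maximal (h2c.mono hGM) hmax hk hkn)

end Kopylov

/-- Kopylov. Let `k ≥ 5` and `G` be a 2-connected graph on `n ≥ k`
vertices. If `e(G) > max{h(n,k,⌊k/2⌋), h(n,k,2)}`, then `G` contains a cycle of
length at least `k`. -/
theorem kopylov (k n : ℕ) (hk : 5 ≤ k) (hn : k ≤ n) (G : SimpleGraph (Fin n))
    (h2c : TwoConnected G)
    (he : max (hFun n k (k / 2)) (hFun n k 2) < edgeCount G) :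
    ∃ (v : Fin n) (c : G.Walk v v), c.IsCycle ∧ k ≤ c.length :=
  kopylov_general (by lia) (by simpa using hn) h2c (by simpa using he)
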